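/- Let (R,B) be an EIC problem with problem graph G in which every requested block is held by some node, and let 𝒩 be the set of all neighborhood partitions. Then (T)_{(R,B)} ≤ min over {Ñ_1,…,Ñ_n} ∈ 𝒩 of Σ_{i=1}^n χ(Ḡ|_{Ñ_i}), where χ(Ḡ|_{Ñ_i}) is the minimum number of cliques of the induced subgraph G|_{Ñ_i} needed to partition Ñ_i. -/

import Mathlib

open Matrix BigOperators

namespace EIC

variable {n m : ℕ}

/-- The vertex set of the problem graph of the EIC problem `(R, B)`:
one vertex for each requirement pair `(u, a)` with `R u a = 1`. -/
abbrev Vtx (R : Matrix (Fin n) (Fin m) (ZMod 2)) : Type :=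
  {p : Fin n × Fin m // R p.1 p.2 = 1}

/-- `(R, B)` have disjoint supports: no position has both `B = 1` and `R = 1`. -/
def DisjointSupports (R B : Matrix (Fin n) (Fin m) (ZMod 2)) : Prop :=
  ∀ u a, ¬(B u a = 1 ∧ R u a = 1)

/-- The standard basis vector `e_a ∈ F_2^m`. -/
def e (m : ℕ) (a : Fin m) : Fin m → ZMod 2 := Pi.single a 1

/-- `β` (with rows indexed by `ι`) is a centralized linear broadcast solution to `(R, B)`:
for every requirement pair `(u, a)` there is `α` with `e_a = α · [β ; diag(B_u)]`. -/
def IsCentralizedSolution (R B : Matrix (Fin n) (Fin m) (ZMod 2))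
    {ι : Type} [Fintype ι] (β : Matrix ι (Fin m) (ZMod 2)) : Prop :=
  ∀ u a, R u a = 1 →
    ∃ α : ι ⊕ Fin m → ZMod 2,
      e m a = α ᵥ* Matrix.fromRows β (Matrix.diagonal (B u))

/-- `(C)_{(R,B)}`: the minimum length of a centralized linear broadcast solution. -/
noncomputable def Copt (R B : Matrix (Fin n) (Fin m) (ZMod 2)) : ℕ :=
  sInf {h | ∃ β : Matrix (Fin h) (Fin m) (ZMod 2), IsCentralizedSolution R B β}

/-- The vertical concatenation of the matrices `β u`, `u ∈ [n]`. -/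
def vconcat {h : Fin n → ℕ} (β : ∀ u : Fin n, Matrix (Fin (h u)) (Fin m) (ZMod 2)) :
    Matrix ((ℓ : Fin n) × Fin (h ℓ)) (Fin m) (ZMod 2) :=
  Matrix.of fun p => β p.1 p.2

/-- `β⁽¹⁾, …, β⁽ⁿ⁾` is a (decentralized) linear broadcast solution to `(R, B)`. -/
def IsBroadcastSolution (R B : Matrix (Fin n) (Fin m) (ZMod 2))
    {h : Fin n → ℕ} (β : ∀ u : Fin n, Matrix (Fin (h u)) (Fin m) (ZMod 2)) : Prop :=
  (∀ u a, B u a = 0 → ∀ i, β u i a = 0) ∧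
  ∀ u a, R u a = 1 →
    ∃ α : ((ℓ : Fin n) × Fin (h ℓ)) ⊕ Fin m → ZMod 2,
      e m a = α ᵥ* Matrix.fromRows (vconcat β) (Matrix.diagonal (B u))

/-- `(D)_{(R,B)}`: the minimum length of a decentralized linear broadcast solution. -/
noncomputable def Dopt (R B : Matrix (Fin n) (Fin m) (ZMod 2)) : ℕ :=
  sInf {s | ∃ (h : Fin n → ℕ) (β : ∀ u : Fin n, Matrix (Fin (h u)) (Fin m) (ZMod 2)),
    IsBroadcastSolution R B β ∧ ∑ u, h u = s}

/-- A task-based solution: a linear broadcast solution where every requirement pair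
`(u, a)` can be decoded from the broadcast of a single responsible sender `ℓ`. -/
def IsTaskBased (R B : Matrix (Fin n) (Fin m) (ZMod 2))
    {h : Fin n → ℕ} (β : ∀ u : Fin n, Matrix (Fin (h u)) (Fin m) (ZMod 2)) : Prop :=
  IsBroadcastSolution R B β ∧
  ∀ u a, R u a = 1 → ∃ ℓ : Fin n, ∃ α : Fin (h ℓ) ⊕ Fin m → ZMod 2,
    e m a = α ᵥ* Matrix.fromRows (β ℓ) (Matrix.diagonal (B u))

/-- `(T)_{(R,B)}`: the minimum length of a task-based solution. -/
noncomputable def Topt (R B : Matrix (Fin n) (Fin m) (ZMod 2)) : ℕ :=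
  sInf {s | ∃ (h : Fin n → ℕ) (β : ∀ u : Fin n, Matrix (Fin (h u)) (Fin m) (ZMod 2)),
    IsTaskBased R B β ∧ ∑ u, h u = s}

/-- The edge relation of the problem graph: for distinct requirement pairs `(u,a)`, `(w,b)`,
there is an edge from `v_{(u,a)}` to `v_{(w,b)}` iff `B u b = 1` or `a = b`. -/
def probEdge (R B : Matrix (Fin n) (Fin m) (ZMod 2)) (v w : Vtx R) : Prop :=
  v ≠ w ∧ (B v.1.1 w.1.2 = 1 ∨ v.1.2 = w.1.2)

/-- A matrix `A` fits a directed graph with edge relation `E`. -/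
def Fits {V : Type} (E : V → V → Prop) (A : Matrix V V (ZMod 2)) : Prop :=
  (∀ k, A k k = 1) ∧ ∀ k l, k ≠ l → ¬ E k l → A k l = 0

/-- `minrk₂`: the minimum `F₂`-rank of a matrix fitting the graph. -/
noncomputable def minrk {V : Type} [Fintype V] (E : V → V → Prop) : ℕ :=
  sInf {r | ∃ A : Matrix V V (ZMod 2), Fits E A ∧ A.rank = r}

/-- `rminrk₂`: the minimum `F₂`-rank of a matrix in `𝒜` fitting the graph. -/
noncomputable def rminrk {V : Type} [Fintype V] (E : V → V → Prop)
    (𝒜 : Set (Matrix V V (ZMod 2))) : ℕ :=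
  sInf {r | ∃ A ∈ 𝒜, Fits E A ∧ A.rank = r}

/-- The column repetition function `φ_{(R,B)}`: the column of `φ(A)` indexed by
`v_{(u,a)}` is the `a`-th column of `A`. -/
def phi (R : Matrix (Fin n) (Fin m) (ZMod 2))
    (A : Matrix (Vtx R) (Fin m) (ZMod 2)) : Matrix (Vtx R) (Vtx R) (ZMod 2) :=
  Matrix.of fun k v => A k v.1.2

/-- The sender neighborhood `N_u = {v_{(w,b)} ∈ V : B u b = 1}`. -/
def senderNbhd (R B : Matrix (Fin n) (Fin m) (ZMod 2)) (u : Fin n) : Set (Vtx R) :=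
  {v | B u v.1.2 = 1}

/-- A neighborhood partition `{Ñ_1, …, Ñ_n}`. -/
def IsNbhdPartition (R B : Matrix (Fin n) (Fin m) (ZMod 2))
    (N : Fin n → Set (Vtx R)) : Prop :=
  (∀ i, N i ⊆ senderNbhd R B i) ∧
  (∀ i j, i ≠ j → Disjoint (N i) (N j)) ∧
  (⋃ i, N i) = Set.univ

open Classical in
/-- `R^(i)`: the request matrix of the EIC subproblem induced by `Ñ_i`; it has ones
exactly at the requirement pairs whose vertex lies in `Ñ_i`. -/
noncomputable def Rsub (R : Matrix (Fin n) (Fin m) (ZMod 2))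
    (N : Fin n → Set (Vtx R)) (i : Fin n) : Matrix (Fin n) (Fin m) (ZMod 2) :=
  Matrix.of fun u a =>
    if hr : R u a = 1 then (if (⟨(u, a), hr⟩ : Vtx R) ∈ N i then 1 else 0) else 0

open Classical in
/-- `B^(i)`: the has-matrix of the EIC subproblem induced by `Ñ_i`; it agrees with `B`
on the columns of blocks requested in `Ñ_i` and is zero elsewhere. -/
noncomputable def Bsub (R B : Matrix (Fin n) (Fin m) (ZMod 2))
    (N : Fin n → Set (Vtx R)) (i : Fin n) : Matrix (Fin n) (Fin m) (ZMod 2) :=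
  Matrix.of fun u a => if ∃ v ∈ N i, v.1.2 = a then B u a else 0

/-- `Cl` is a clique for the edge relation `E`. -/
def IsClique {V : Type} (E : V → V → Prop) (Cl : Set V) : Prop :=
  ∀ k ∈ Cl, ∀ l ∈ Cl, k ≠ l → E k l

/-- `I` is an independent set for the edge relation `E` (no edge in either direction). -/
def IsIndep {V : Type} (E : V → V → Prop) (I : Set V) : Prop :=
  ∀ k ∈ I, ∀ l ∈ I, k ≠ l → ¬ E k l ∧ ¬ E l k

/-- `χ(Ḡ|_S)`: the minimum number of cliques of the induced subgraph `G|_S`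
needed to partition `S`. -/
noncomputable def cliqueCoverNum {V : Type} (E : V → V → Prop) (S : Set V) : ℕ :=
  sInf {t | ∃ Cl : Fin t → Set V, (∀ i, Cl i ⊆ S) ∧ (∀ i, IsClique E (Cl i)) ∧
    (∀ i j, i ≠ j → Disjoint (Cl i) (Cl j)) ∧ (⋃ i, Cl i) = S}

/-- `χ(G)`: the minimum number of independent sets of `G` needed to partition
its vertex set. -/
noncomputable def chromNum {V : Type} [Fintype V] (E : V → V → Prop) : ℕ :=
  sInf {t | ∃ I : Fin t → Set V, (∀ i, IsIndep E (I i)) ∧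
    (∀ i j, i ≠ j → Disjoint (I i) (I j)) ∧ (⋃ i, I i) = Set.univ}

/-- `ω(Ḡ|_S)`: the maximum size of an independent set of the induced subgraph `G|_S`. -/
noncomputable def indepNum {V : Type} (E : V → V → Prop) (S : Set V) : ℕ :=
  sSup {t | ∃ I ⊆ S, IsIndep E I ∧ I.ncard = t}

/-- The set of neighborhood-cliques: vertex sets of maximal cliques of the induced
subgraphs `G|_{N_i}`, over all senders `i`. -/
def nbhdCliques (R B : Matrix (Fin n) (Fin m) (ZMod 2)) : Set (Set (Vtx R)) :=
  {Cl | ∃ i : Fin n, Cl ⊆ senderNbhd R B i ∧ IsClique (probEdge R B) Cl ∧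
    ∀ Cl', Cl ⊆ Cl' → Cl' ⊆ senderNbhd R B i → IsClique (probEdge R B) Cl' → Cl' = Cl}

/-! Sender `ℓ` broadcasts, for every clique of a clique partition of `Ñ_ℓ`, the sum of the blocks
requested in that clique; it can do so since `Ñ_ℓ ⊆ N_ℓ`. A node `u` with a requirement pair
`(u, a)` in the clique has all of the other blocks in the sum, because they are the blocks of
out-neighbors of `v_{(u,a)}`, so it subtracts them and recovers block `a`. Hence one row per clique
suffices, and each requirement pair is served by a single sender. -/

section CliquePartition

variable {V ι κ : Type} {E : V → V → Prop} {S : Set V}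

/-- `Cl` is a partition of `S` into cliques of the digraph with edge relation `E`, possibly with
empty parts. For `ι = Fin t` this is the condition minimized over in `cliqueCoverNum`. -/
def IsCliquePartition (E : V → V → Prop) (S : Set V) (Cl : ι → Set V) : Prop :=
  (∀ i, Cl i ⊆ S) ∧ (∀ i, IsClique E (Cl i)) ∧
    (∀ i j, i ≠ j → Disjoint (Cl i) (Cl j)) ∧ (⋃ i, Cl i) = S

lemma IsCliquePartition.comp_equiv {Cl : ι → Set V} (h : IsCliquePartition E S Cl) (f : κ ≃ ι) :
    IsCliquePartition E S (Cl ∘ f) :=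
  have ⟨hsub, hclique, hdisjoint, hunion⟩ := h
  ⟨fun k => hsub (f k), fun k => hclique (f k),
    fun _ _ hij => hdisjoint _ _ (f.injective.ne hij), (f.surjective.iUnion_comp Cl).trans hunion⟩

lemma isCliquePartition_singleton (E : V → V → Prop) (S : Set V) :
    IsCliquePartition E S fun x : S => {x.1} := by
  refine ⟨fun x => Set.singleton_subset_iff.2 x.2, ?_, ?_, S.iUnion_of_singleton_coe⟩
  · rintro x _ rfl _ rfl hne
    exact absurd rfl hne
  · intro x y hxy
    exact Set.disjoint_singleton.2 (Subtype.coe_injective.ne hxy)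

lemma exists_isCliquePartition_cliqueCoverNum (E : V → V → Prop) (hS : S.Finite) :
    ∃ Cl : Fin (cliqueCoverNum E S) → Set V, IsCliquePartition E S Cl := by
  have := hS.to_subtype
  obtain ⟨t, ⟨f⟩⟩ := Finite.exists_equiv_fin S
  exact Nat.sInf_mem (s := {t | ∃ Cl : Fin t → Set V, IsCliquePartition E S Cl})
    ⟨t, _, (isCliquePartition_singleton E S).comp_equiv f.symm⟩

end CliquePartition

lemma exists_single_eq_vecMul_fromRows_diagonal {ι κ K : Type*} [Fintype ι] [Fintype κ]
    [DecidableEq κ] [DivisionRing K] {M : Matrix ι κ K} {d : κ → K} {i : ι} {a : κ}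
    (ha : M i a ≠ 0) (hd : ∀ b, b ≠ a → M i b ≠ 0 → d b ≠ 0) :
    ∃ α : ι ⊕ κ → K, Pi.single a 1 = α ᵥ* Matrix.fromRows M (Matrix.diagonal d) := by
  classical
  -- Scale row `i` to have entry `1` at `a`, then cancel its other entries by rows of `diagonal d`.
  set c := (M i a)⁻¹
  refine ⟨Sum.elim (Pi.single i c) fun b => if b = a then 0 else -(c * M i b) * (d b)⁻¹, ?_⟩
  ext b
  rw [Matrix.sumElim_vecMul_fromRows, Pi.add_apply, Matrix.vecMul_diagonal, Matrix.single_vecMul,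
    Pi.smul_apply, Matrix.row_apply, smul_eq_mul]
  by_cases hb : b = a
  · subst hb
    simp [c, ha]
  · by_cases hMb : M i b = 0
    · simp [hb, hMb]
    · simp [hb, hd b hb hMb]

section XorRow

variable {R B : Matrix (Fin n) (Fin m) (ZMod 2)} {C : Set (Vtx R)}

/-- The set of blocks requested by the requirement pairs in `C`. -/
def requestedBlocks (C : Set (Vtx R)) : Set (Fin m) :=
  (fun v : Vtx R => v.1.2) '' C

/-- The coefficient row of the broadcast serving `C`: the sum of the blocks requested in `C`, each
taken once even when several pairs of `C` request it. -/
noncomputable def xorRow (C : Set (Vtx R)) : Fin m → ZMod 2 :=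
  (requestedBlocks C).indicator 1

lemma IsClique.has_of_mem_requestedBlocks (hC : IsClique (probEdge R B) C) {v : Vtx R}
    (hv : v ∈ C) {b : Fin m} (hb : b ∈ requestedBlocks C) (hne : b ≠ v.1.2) : B v.1.1 b = 1 := by
  obtain ⟨w, hw, rfl⟩ := hb
  have hvw : v ≠ w := fun h => hne (h ▸ rfl)
  exact (hC v hv w hw hvw).2.resolve_right hne.symm

lemma has_of_mem_requestedBlocks_of_subset_senderNbhd {u : Fin n} (hC : C ⊆ senderNbhd R B u)
    {b : Fin m} (hb : b ∈ requestedBlocks C) : B u b = 1 := by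
  obtain ⟨w, hw, rfl⟩ := hb
  exact hC hw

lemma xorRow_eq_zero_of_subset_senderNbhd {u : Fin n} (hC : C ⊆ senderNbhd R B u) {a : Fin m}
    (ha : B u a = 0) : xorRow C a = 0 := by
  have ha_notMem : a ∉ requestedBlocks C := fun hmem =>
    zero_ne_one (ha.symm.trans (has_of_mem_requestedBlocks_of_subset_senderNbhd hC hmem))
  exact Set.indicator_of_notMem ha_notMem _

lemma IsClique.exists_decoding (hC : IsClique (probEdge R B) C) {v : Vtx R} (hv : v ∈ C)
    {ι : Type*} [Fintype ι] {M : Matrix ι (Fin m) (ZMod 2)} {i : ι} (hi : M i = xorRow C) :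
    ∃ α : ι ⊕ Fin m → ZMod 2,
      e m v.1.2 = α ᵥ* Matrix.fromRows M (Matrix.diagonal (B v.1.1)) := by
  have hv_row : M i v.1.2 = 1 := by
    rw [hi]
    exact Set.indicator_of_mem (Set.mem_image_of_mem _ hv) _
  refine exists_single_eq_vecMul_fromRows_diagonal (hv_row.trans_ne one_ne_zero) fun b hne hb => ?_
  have hb_mem : b ∈ requestedBlocks C := Set.mem_of_indicator_ne_zero (hi ▸ hb)
  exact (hC.has_of_mem_requestedBlocks hv hb_mem hne).trans_ne one_ne_zero

end XorRow

section TaskBased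

variable {R B : Matrix (Fin n) (Fin m) (ZMod 2)} {h : Fin n → ℕ}

lemma IsTaskBased.Topt_le {β : ∀ u : Fin n, Matrix (Fin (h u)) (Fin m) (ZMod 2)}
    (hβ : IsTaskBased R B β) : Topt R B ≤ ∑ u, h u :=
  Nat.sInf_le ⟨h, β, hβ, rfl⟩

lemma isTaskBased_xorRow {Cl : ∀ u : Fin n, Fin (h u) → Set (Vtx R)}
    (hsub : ∀ u i, Cl u i ⊆ senderNbhd R B u) (hclique : ∀ u i, IsClique (probEdge R B) (Cl u i))
    (hcover : ∀ v, ∃ u i, v ∈ Cl u i) :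
    IsTaskBased R B fun u => Matrix.of fun i => xorRow (Cl u i) := by
  refine ⟨⟨fun u _ ha i => xorRow_eq_zero_of_subset_senderNbhd (hsub u i) ha,
    fun u a hR => ?_⟩, fun u a hR => ?_⟩
  · obtain ⟨ℓ, i, hv⟩ := hcover ⟨(u, a), hR⟩
    exact (hclique ℓ i).exists_decoding hv (i := Sigma.mk ℓ i) rfl
  · obtain ⟨ℓ, i, hv⟩ := hcover ⟨(u, a), hR⟩
    exact ⟨ℓ, (hclique ℓ i).exists_decoding hv (i := i) rfl⟩

end TaskBased

lemma exists_isNbhdPartition {R B : Matrix (Fin n) (Fin m) (ZMod 2)}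
    (hheld : ∀ u a, R u a = 1 → ∃ w, B w a = 1) : ∃ N, IsNbhdPartition R B N := by
  choose sender hsender using fun v : Vtx R => hheld v.1.1 v.1.2 v.2
  refine ⟨fun i => sender ⁻¹' {i}, ?_, fun i j hij => ?_, ?_⟩
  · rintro _ v rfl
    exact hsender v
  · exact (Set.disjoint_singleton.2 hij).preimage sender
  · exact Set.iUnion_eq_univ_iff.2 fun v => ⟨sender v, rfl⟩

theorem taskbased_le_min_partition_chrom_general {R B : Matrix (Fin n) (Fin m) (ZMod 2)}
    {N : Fin n → Set (Vtx R)} (hsub : ∀ i, N i ⊆ senderNbhd R B i)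
    (hcover : (⋃ i, N i) = Set.univ) :
    Topt R B ≤ ∑ i, cliqueCoverNum (probEdge R B) (N i) := by
  choose Cl hCl_sub hCl_clique _ hCl_union using fun i =>
    exists_isCliquePartition_cliqueCoverNum (probEdge R B) (N i).toFinite
  have hCl_nbhd : ∀ i k, Cl i k ⊆ senderNbhd R B i := fun i k => (hCl_sub i k).trans (hsub i)
  have hCl_cover : ∀ v, ∃ i k, v ∈ Cl i k := by
    intro v
    obtain ⟨i, hi⟩ := Set.iUnion_eq_univ_iff.1 hcover v
    exact ⟨i, Set.mem_iUnion.1 ((hCl_union i).symm ▸ hi)⟩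
  exact (isTaskBased_xorRow hCl_nbhd hCl_clique hCl_cover).Topt_le

theorem taskbased_le_min_partition_chrom {n m : ℕ}
    (R B : Matrix (Fin n) (Fin m) (ZMod 2)) (hdisj : DisjointSupports R B)
    (hheld : ∀ u a, R u a = 1 → ∃ w, B w a = 1) :
    Topt R B ≤ sInf {s | ∃ N : Fin n → Set (Vtx R), IsNbhdPartition R B N ∧
      s = ∑ i, cliqueCoverNum (probEdge R B) (N i)} := by
  obtain ⟨N₀, hN₀⟩ := exists_isNbhdPartition hheld
  exact le_csInf ⟨_, N₀, hN₀, rfl⟩ fun _ ⟨_, ⟨hsub, _, hcover⟩, hs⟩ =>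
    hs ▸ taskbased_le_min_partition_chrom_general hsub hcover

end EIC
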